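/- Let n ≥ 1, let A be an n×n complex matrix, and let γ be a partition of n. Then ∫_{U(n)} d_{[γ]}(u A u*) du = (n choose γ) · ∫_{U(n)} ∏_{i=1}^n ((u A u*)_{ii})^{γ_i} du, where the integrals are over the unitary group U(n) with respect to its Haar probability measure. (Formula (22).) -/

import Mathlib

open MeasureTheory Matrix
open scoped ComplexOrder

noncomputable instance {n : ℕ} : MeasurableSpace (Matrix.unitaryGroup (Fin n) ℂ) := borel _
instance {n : ℕ} : BorelSpace (Matrix.unitaryGroup (Fin n) ℂ) := ⟨rfl⟩

/-- conjugation of `A` by the unitary `u` : `u * A * u*` -/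
noncomputable def conjU {n : ℕ} (A : Matrix (Fin n) (Fin n) ℂ) (u : Matrix.unitaryGroup (Fin n) ℂ) :
    Matrix (Fin n) (Fin n) ℂ :=
  (u : Matrix (Fin n) (Fin n) ℂ) * A * star (u : Matrix (Fin n) (Fin n) ℂ)

/-- the induced character `[η]` of the symmetric group -/
noncomputable def inducedChar (n : ℕ) (η : Fin n → ℕ) (σ : Equiv.Perm (Fin n)) : ℕ :=
  Nat.card {f : Fin n → Fin n // (∀ j, Nat.card {i // f i = j} = η j) ∧ f ∘ σ = f}

/-- generalized matrix function attached to the induced character `[η]` -/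
noncomputable def dInduced {n : ℕ} (η : Fin n → ℕ) (M : Matrix (Fin n) (Fin n) ℂ) : ℂ :=
  ∑ σ : Equiv.Perm (Fin n), (inducedChar n η σ : ℂ) * ∏ i, M i (σ i)

/-- `η` is a partition of `n` with at most `n` parts -/
def IsPartition (n : ℕ) (η : Fin n → ℕ) : Prop := Antitone η ∧ ∑ i, η i = n

/-- dominance order on partitions -/
def Dominates {n : ℕ} (η η' : Fin n → ℕ) : Prop :=
  ∀ j : Fin n, ∑ i ∈ Finset.Iic j, η' i ≤ ∑ i ∈ Finset.Iic j, η i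

/-!
The average `T` of `(u A u*)^{⊗m}` over the unitary group, where `m` is the index set of the
matrices, commutes with `v^{⊗m}` for every unitary `v`, hence with `X^{⊗m}` for every matrix `X`:
diagonal `X` are reached through weights, Hermitian `X` through the spectral theorem, and `H + i K`
by continuing the polynomial identity for `H + r K`, `r` real. Applied to the 0-1 matrix of a
function `f : m → m`, this gives `T f f = ∑ T id σ` over the permutations `σ` with `f ∘ σ = f`.
Summing over all `f` with fibres of sizes `γ`, the right-hand side becomes the average of
`d_{[γ]}(u A u*)`, while every left-hand side equals the average of `∏ k, ((u A u*) k k) ^ γ k`;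
there are `n choose γ` such `f`.
-/

section

open Finset Polynomial

section FiberCard

variable {ι m : Type*} [Fintype ι] [DecidableEq m]

/-- The fibre sizes of `f : ι → m`, that is, the weight of the basis tensor indexed by `f`. -/
def fiberCard (f : ι → m) (k : m) : ℕ := Fintype.card {i // f i = k}

lemma fiberCard_lt_card_add_one (f : ι → m) (k : m) : fiberCard f k < Fintype.card ι + 1 :=
  Nat.lt_succ_of_le (Fintype.card_subtype_le _)

lemma prod_comp_eq_prod_pow_fiberCard [Fintype m] {M : Type*} [CommMonoid M] (f : ι → m)
    (d : m → M) : ∏ i, d (f i) = ∏ k, d k ^ fiberCard f k := by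
  simp [← Fintype.prod_fiberwise' f d, fiberCard]

lemma bijective_of_fiberCard_eq_fiberCard_id [Fintype m] {f : m → m}
    (hf : fiberCard f = fiberCard id) : Function.Bijective f := by
  refine Finite.surjective_iff_bijective.mp fun k => ?_
  have hpos : 0 < fiberCard f k := by
    rw [hf]
    exact Fintype.card_pos_iff.mpr ⟨k, rfl⟩
  obtain ⟨i, hi⟩ := Fintype.card_pos_iff.mp hpos
  exact ⟨i, hi⟩

-- Both sides are the coefficient of `∏ k, X k ^ γ k` in `(∑ k, X k) ^ card ι`.
theorem card_fiberCard_eq_multinomial [DecidableEq ι] [Fintype m] {γ : m → ℕ}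
    (hγ : ∑ k, γ k = Fintype.card ι) :
    #{f : ι → m | fiberCard f = γ} = Nat.multinomial univ γ := by
  let d : m →₀ ℕ := Finsupp.equivFunOnFinite.symm γ
  have hd : d.sum (fun _ k => k) = Fintype.card ι := by
    rw [Finsupp.sum_fintype _ _ fun _ => rfl]
    exact hγ
  have hmonomial (f : ι → m) : ∏ i, (MvPolynomial.X (f i) : MvPolynomial m ℕ) =
      MvPolynomial.monomial (Finsupp.equivFunOnFinite.symm (fiberCard f)) 1 := by
    rw [prod_comp_eq_prod_pow_fiberCard f MvPolynomial.X, MvPolynomial.monomial_eq,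
      Finsupp.prod_fintype _ _ fun _ => pow_zero _]
    simp
  have hexpand : (∑ k, MvPolynomial.X k : MvPolynomial m ℕ) ^ Fintype.card ι =
      ∑ f : ι → m, ∏ i, MvPolynomial.X (f i) := by
    rw [← card_univ, ← prod_const, prod_univ_sum, Fintype.piFinset_univ]
  have hcoeff := MvPolynomial.coeff_sum_X_pow_of_fintype (R := ℕ) d (Fintype.card ι)
  simp only [if_pos hd, hexpand, hmonomial, MvPolynomial.coeff_sum,
    MvPolynomial.coeff_monomial, d, EmbeddingLike.apply_eq_iff_eq, sum_boole, Nat.cast_id,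
    Finsupp.multinomial_eq_of_support_subset (subset_univ _)] at hcoeff
  exact hcoeff

end FiberCard

lemma inducedChar_eq_card {n : ℕ} (η : Fin n → ℕ) (σ : Equiv.Perm (Fin n)) :
    inducedChar n η σ = #{f : Fin n → Fin n | fiberCard f = η ∧ f ∘ σ = f} := by
  simp only [inducedChar, Nat.card_eq_fintype_card, Fintype.card_subtype, funext_iff, fiberCard]

section TensorPow

variable (ι : Type*) [Fintype ι] {l m n R S : Type*}

/-- The tensor power `X^{⊗ι}` of a matrix, in the bases of elementary tensors, which are indexed
by functions on `ι`. -/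
def tensorPow [CommMonoid R] (X : Matrix m n R) : Matrix (ι → m) (ι → n) R :=
  Matrix.of fun g h => ∏ i, X (g i) (h i)

variable {ι}

lemma tensorPow_apply [CommMonoid R] (X : Matrix m n R) (g : ι → m) (h : ι → n) :
    tensorPow ι X g h = ∏ i, X (g i) (h i) :=
  rfl

lemma tensorPow_mul [DecidableEq ι] [Fintype m] [CommSemiring R] (X : Matrix l m R)
    (Y : Matrix m n R) : tensorPow ι (X * Y) = tensorPow ι X * tensorPow ι Y := by
  ext g h
  simp only [tensorPow_apply, Matrix.mul_apply, prod_univ_sum, Fintype.piFinset_univ,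
    prod_mul_distrib]

lemma tensorPow_diagonal [DecidableEq m] [CommSemiring R] (d : m → R) :
    tensorPow ι (diagonal d) = diagonal fun g : ι → m => ∏ i, d (g i) := by
  ext g h
  simp [tensorPow_apply, diagonal_apply, Fintype.prod_ite_zero, funext_iff]

lemma tensorPow_one [DecidableEq m] [CommSemiring R] :
    tensorPow ι (1 : Matrix m m R) = 1 := by
  simp [← diagonal_one, tensorPow_diagonal]

lemma tensorPow_map [CommSemiring R] [CommSemiring S] (φ : R →+* S) (X : Matrix m n R) :
    tensorPow ι (X.map φ) = (tensorPow ι X).map φ := by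
  ext g h
  simp [tensorPow_apply]

theorem commute_tensorPow_add_smul_of_infinite [DecidableEq ι] [Fintype m] [CommRing R] [IsDomain R]
    {T : Matrix (ι → m) (ι → m) R} {H K : Matrix m m R} {s : Set R} (hs : s.Infinite)
    (hT : ∀ r ∈ s, Commute T (tensorPow ι (H + r • K))) (z : R) :
    Commute T (tensorPow ι (H + z • K)) := by
  let P : Matrix (ι → m) (ι → m) R[X] := tensorPow ι (H.map C + (X : R[X]) • K.map C)
  have heval (r : R) : P.map (evalRingHom r) = tensorPow ι (H + r • K) := by
    rw [← tensorPow_map]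
    congr 1
    ext i j
    simp [mul_comm r]
  have hTC (r : R) : (T.map C).map (evalRingHom r) = T := by
    ext g h
    simp
  have hP : T.map C * P = P * T.map C := by
    ext1 g h
    refine eq_of_infinite_eval_eq _ _ (hs.mono fun r hr => ?_)
    have hr' : (T.map C * P).map (evalRingHom r) = (P * T.map C).map (evalRingHom r) := by
      rw [Matrix.map_mul, Matrix.map_mul, heval, hTC]
      exact hT r hr
    exact congrFun₂ hr' g h
  have hz := congrArg (fun Q => Q.map (evalRingHom z)) hP
  simp only [Matrix.map_mul, heval, hTC] at hz
  exact hz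

lemma apply_comp_eq_sum_of_commute [DecidableEq ι] [Fintype m] [DecidableEq m] [CommSemiring R]
    {T : Matrix (ι → m) (ι → m) R} {f : m → m}
    (hT : Commute T (tensorPow ι ((1 : Matrix m m R).submatrix f id))) (g h : ι → m) :
    T (f ∘ g) h = ∑ k with f ∘ k = h, T g k := by
  have hpow : tensorPow ι ((1 : Matrix m m R).submatrix f id) =
      (1 : Matrix (ι → m) (ι → m) R).submatrix (f ∘ ·) id := by
    rw [← tensorPow_one]
    rfl
  rw [hpow] at hT
  have hgh := congrFun₂ hT.eq g h
  simpa [Matrix.mul_apply, one_apply, sum_filter] using hgh.symm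

end TensorPow

section UnitaryGroup

variable {m 𝕜 : Type*} [Fintype m] [DecidableEq m] [RCLike 𝕜]

lemma diagonal_mem_unitaryGroup {d : m → 𝕜} (hd : ∀ i, ‖d i‖ = 1) :
    diagonal d ∈ unitaryGroup m 𝕜 := by
  rw [mem_unitaryGroup_iff, star_eq_conjTranspose, diagonal_conjTranspose, diagonal_mul_diagonal,
    ← diagonal_one]
  congr 1 with i
  simp [RCLike.mul_conj, hd]

instance compactSpace_unitaryGroup : CompactSpace (unitaryGroup m 𝕜) := by
  have hbox : IsCompact (Set.univ.pi fun _ => Set.univ.pi fun _ => Metric.closedBall 0 1 :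
      Set (Matrix m m 𝕜)) :=
    isCompact_univ_pi fun _ => isCompact_univ_pi fun _ => isCompact_closedBall 0 1
  have hclosed : IsClosed (unitaryGroup m 𝕜 : Set (Matrix m m 𝕜)) :=
    isClosed_unitary (R := Matrix m m 𝕜)
  refine isCompact_iff_compactSpace.mp (hbox.of_isClosed_subset hclosed fun U hU i _ j _ => ?_)
  simpa using entry_norm_bound_of_unitary hU i j

end UnitaryGroup

section UnitaryEquivariant

variable {ι m : Type*} [Fintype ι] [DecidableEq ι] [Fintype m] [DecidableEq m]

/-- `T` commutes with the tensor representation `v ↦ v^{⊗ι}` of the unitary group. -/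
def IsUnitaryEquivariant (T : Matrix (ι → m) (ι → m) ℂ) : Prop :=
  ∀ v ∈ unitaryGroup m ℂ, Commute T (tensorPow ι v)

namespace IsUnitaryEquivariant

variable {T : Matrix (ι → m) (ι → m) ℂ}

-- Commutation with `diag(1, …, z, …, 1)` reads `T g h * z ^ b = z ^ a * T g h`, where `a` and `b`
-- are at most `card ι`; take for `z` a root of unity of larger order.
lemma fiberCard_eq_of_apply_ne_zero (hT : IsUnitaryEquivariant T) {g h : ι → m}
    (hgh : T g h ≠ 0) : fiberCard g = fiberCard h := by
  ext k
  obtain ⟨z, hz⟩ : ∃ z : ℂ, IsPrimitiveRoot z (Fintype.card ι + 1) :=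
    ⟨_, Complex.isPrimitiveRoot_exp _ (Nat.succ_ne_zero _)⟩
  let d : m → ℂ := Pi.mulSingle k z
  have hd (i : m) : ‖d i‖ = 1 := by
    rcases eq_or_ne i k with rfl | hik
    · simp [d, hz.norm'_eq_one (Nat.succ_ne_zero _)]
    · simp [d, hik]
  have hprod (f : ι → m) : ∏ i, d (f i) = z ^ fiberCard f k := by
    rw [prod_comp_eq_prod_pow_fiberCard, prod_eq_single k] <;> simp +contextual [d]
  have hcomm := congrFun₂ (hT _ (diagonal_mem_unitaryGroup hd)).eq g h
  rw [tensorPow_diagonal, mul_diagonal, diagonal_mul, hprod, hprod, mul_comm] at hcomm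
  exact (hz.pow_inj (fiberCard_lt_card_add_one h k) (fiberCard_lt_card_add_one g k)
    (mul_right_cancel₀ hgh hcomm)).symm

lemma commute_tensorPow_diagonal (hT : IsUnitaryEquivariant T) (d : m → ℂ) :
    Commute T (tensorPow ι (diagonal d)) := by
  ext g h
  rw [tensorPow_diagonal, mul_diagonal, diagonal_mul, mul_comm]
  rcases eq_or_ne (T g h) 0 with hgh | hgh
  · simp only [hgh, mul_zero]
  · simp only [prod_comp_eq_prod_pow_fiberCard, hT.fiberCard_eq_of_apply_ne_zero hgh]

lemma commute_tensorPow_of_isHermitian (hT : IsUnitaryEquivariant T) {H : Matrix m m ℂ}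
    (hH : H.IsHermitian) : Commute T (tensorPow ι H) := by
  rw [hH.spectral_theorem, Unitary.conjStarAlgAut_apply, tensorPow_mul, tensorPow_mul]
  exact ((hT _ hH.eigenvectorUnitary.2).mul_right (hT.commute_tensorPow_diagonal _)).mul_right
    (hT _ (star hH.eigenvectorUnitary).2)

theorem commute_tensorPow (hT : IsUnitaryEquivariant T) (X : Matrix m m ℂ) :
    Commute T (tensorPow ι X) := by
  rw [← realPart_add_I_smul_imaginaryPart X]
  refine commute_tensorPow_add_smul_of_infinite
    (Set.infinite_range_of_injective Complex.ofReal_injective) ?_ Complex.I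
  rintro _ ⟨r, rfl⟩
  refine hT.commute_tensorPow_of_isHermitian ((realPart X).2.add ?_)
  exact IsSelfAdjoint.smul (Complex.conj_ofReal r) (imaginaryPart X).2

theorem apply_eq_sum_perm {T : Matrix (m → m) (m → m) ℂ} (hT : IsUnitaryEquivariant T)
    (f h : m → m) : T f h = ∑ σ : Equiv.Perm m, if f ∘ σ = h then T id σ else 0 := by
  have hbij (g : m → m) (hg : T id g ≠ 0) : Function.Bijective g :=
    bijective_of_fiberCard_eq_fiberCard_id (hT.fiberCard_eq_of_apply_ne_zero hg).symm
  have hsum : T f h = ∑ g with f ∘ g = h, T id g :=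
    apply_comp_eq_sum_of_commute (hT.commute_tensorPow _) id h
  rw [hsum, sum_filter]
  refine (Fintype.sum_of_injective (fun σ : Equiv.Perm m => ⇑σ) DFunLike.coe_injective _ _
    (fun g hperm => ?_) fun _ => rfl).symm
  have hg : T id g = 0 := by
    by_contra hne
    exact hperm ⟨Equiv.ofBijective g (hbij g hne), rfl⟩
  rw [hg, ite_self]

theorem sum_inducedChar_mul {n : ℕ} {T : Matrix (Fin n → Fin n) (Fin n → Fin n) ℂ}
    (hT : IsUnitaryEquivariant T) (η : Fin n → ℕ) :
    ∑ σ : Equiv.Perm (Fin n), inducedChar n η σ * T id σ = ∑ f with fiberCard f = η, T f f := by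
  calc ∑ σ : Equiv.Perm (Fin n), inducedChar n η σ * T id σ
      = ∑ σ : Equiv.Perm (Fin n), ∑ f with fiberCard f = η, if f ∘ σ = f then T id σ else 0 := by
        simp only [inducedChar_eq_card, ← sum_filter, filter_filter, sum_const, nsmul_eq_mul]
    _ = ∑ f with fiberCard f = η, ∑ σ : Equiv.Perm (Fin n), if f ∘ σ = f then T id σ else 0 :=
        sum_comm
    _ = ∑ f with fiberCard f = η, T f f := by
        simp only [← hT.apply_eq_sum_perm]

end IsUnitaryEquivariant

end UnitaryEquivariant

section IntegralMul

variable {α l m n 𝕜 : Type*} [MeasurableSpace α] {μ : Measure α} [Fintype m] [RCLike 𝕜]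

lemma of_integral_mul {M : α → Matrix l m 𝕜} (hM : ∀ i j, Integrable (fun a => M a i j) μ)
    (B : Matrix m n 𝕜) :
    (Matrix.of fun i j => ∫ a, M a i j ∂μ) * B = Matrix.of fun i j => ∫ a, (M a * B) i j ∂μ := by
  ext i j
  simp only [Matrix.mul_apply, of_apply, ← integral_mul_const]
  exact (integral_finsetSum _ fun k _ => (hM i k).mul_const _).symm

lemma mul_of_integral {M : α → Matrix m n 𝕜} (hM : ∀ i j, Integrable (fun a => M a i j) μ)
    (B : Matrix l m 𝕜) :
    B * (Matrix.of fun i j => ∫ a, M a i j ∂μ) = Matrix.of fun i j => ∫ a, (B * M a) i j ∂μ := by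
  ext i j
  simp only [Matrix.mul_apply, of_apply, ← integral_const_mul]
  exact (integral_finsetSum _ fun k _ => (hM k j).const_mul _).symm

end IntegralMul

section TensorMoment

variable {ι : Type*} [Fintype ι] {n : ℕ}

lemma conjU_mul_mul (A : Matrix (Fin n) (Fin n) ℂ) (v u : unitaryGroup (Fin n) ℂ) :
    conjU A (v * u) * v = v * conjU A u := by
  have hv : star (v : Matrix (Fin n) (Fin n) ℂ) * v = 1 := Unitary.coe_star_mul_self v
  simp only [conjU, Submonoid.coe_mul, star_mul, mul_assoc, hv, mul_one]

lemma continuous_conjU (A : Matrix (Fin n) (Fin n) ℂ) : Continuous (conjU A) :=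
  (continuous_subtype_val.mul continuous_const).mul continuous_subtype_val.star

lemma integrable_tensorPow_conjU (μ : Measure (unitaryGroup (Fin n) ℂ)) [IsFiniteMeasure μ]
    (A : Matrix (Fin n) (Fin n) ℂ) (g h : ι → Fin n) :
    Integrable (fun u => tensorPow ι (conjU A u) g h) μ :=
  (continuous_finsetProd _ fun _ _ =>
    (continuous_conjU A).matrix_elem _ _).integrable_of_hasCompactSupport (.of_compactSpace _)

/-- The average of `(u A u*)^{⊗ι}` over the unitary group with respect to `μ`, taken entrywise so
that no norm on matrices has to be chosen. -/
noncomputable def tensorMoment (ι : Type*) [Fintype ι] (μ : Measure (unitaryGroup (Fin n) ℂ))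
    (A : Matrix (Fin n) (Fin n) ℂ) : Matrix (ι → Fin n) (ι → Fin n) ℂ :=
  Matrix.of fun g h => ∫ u, tensorPow ι (conjU A u) g h ∂μ

theorem isUnitaryEquivariant_tensorMoment [DecidableEq ι] (μ : Measure (unitaryGroup (Fin n) ℂ))
    [μ.IsMulLeftInvariant] [IsFiniteMeasure μ] (A : Matrix (Fin n) (Fin n) ℂ) :
    IsUnitaryEquivariant (tensorMoment ι μ A) := by
  intro v hv
  have hint := integrable_tensorPow_conjU (ι := ι) μ A
  rw [Commute, SemiconjBy, tensorMoment, of_integral_mul hint, mul_of_integral hint]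
  ext g h
  calc ∫ u, (tensorPow ι (conjU A u) * tensorPow ι v) g h ∂μ
      = ∫ u, (tensorPow ι (conjU A (⟨v, hv⟩ * u)) * tensorPow ι v) g h ∂μ :=
        (integral_mul_left_eq_self
          (fun u => (tensorPow ι (conjU A u) * tensorPow ι v) g h) ⟨v, hv⟩).symm
    _ = ∫ u, (tensorPow ι v * tensorPow ι (conjU A u)) g h ∂μ := by
        simp only [← tensorPow_mul, conjU_mul_mul A ⟨v, hv⟩]

lemma integral_dInduced_conjU (μ : Measure (unitaryGroup (Fin n) ℂ)) [IsFiniteMeasure μ]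
    (A : Matrix (Fin n) (Fin n) ℂ) (η : Fin n → ℕ) :
    ∫ u, dInduced η (conjU A u) ∂μ =
      ∑ σ : Equiv.Perm (Fin n), inducedChar n η σ * tensorMoment (Fin n) μ A id σ := by
  simp only [tensorMoment, of_apply, ← integral_const_mul]
  exact integral_finsetSum _ fun σ _ => (integrable_tensorPow_conjU μ A id σ).const_mul _

lemma tensorMoment_apply_self (μ : Measure (unitaryGroup (Fin n) ℂ))
    (A : Matrix (Fin n) (Fin n) ℂ) (f : ι → Fin n) :
    tensorMoment ι μ A f f = ∫ u, ∏ k, conjU A u k k ^ fiberCard f k ∂μ := by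
  simp only [tensorMoment, of_apply, tensorPow_apply]
  exact integral_congr_ae (.of_forall fun u =>
    prod_comp_eq_prod_pow_fiberCard f fun k => conjU A u k k)

end TensorMoment

theorem stmt2_general (n : ℕ) (μ : Measure (Matrix.unitaryGroup (Fin n) ℂ))
    [μ.IsMulLeftInvariant] [IsFiniteMeasure μ] (A : Matrix (Fin n) (Fin n) ℂ)
    (γ : Fin n → ℕ) (hγ : ∑ i, γ i = n) :
    ∫ u, dInduced γ (conjU A u) ∂μ =
      (Nat.multinomial Finset.univ γ : ℂ) * ∫ u, ∏ i, (conjU A u) i i ^ γ i ∂μ := by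
  have hcard : #{f : Fin n → Fin n | fiberCard f = γ} = Nat.multinomial univ γ :=
    card_fiberCard_eq_multinomial (by rw [hγ, Fintype.card_fin])
  calc ∫ u, dInduced γ (conjU A u) ∂μ
      = ∑ f with fiberCard f = γ, tensorMoment (Fin n) μ A f f := by
        rw [integral_dInduced_conjU, (isUnitaryEquivariant_tensorMoment μ A).sum_inducedChar_mul]
    _ = ∑ f : Fin n → Fin n with fiberCard f = γ, ∫ u, ∏ i, conjU A u i i ^ γ i ∂μ := by
        refine sum_congr rfl fun f hf => ?_
        rw [tensorMoment_apply_self, (mem_filter.mp hf).2]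
    _ = Nat.multinomial univ γ * ∫ u, ∏ i, conjU A u i i ^ γ i ∂μ := by
        rw [sum_const, hcard, nsmul_eq_mul]

end

theorem stmt2 (n : ℕ) (hn : 1 ≤ n)
    (μ : Measure (Matrix.unitaryGroup (Fin n) ℂ))
    [μ.IsMulLeftInvariant] [IsProbabilityMeasure μ]
    (A : Matrix (Fin n) (Fin n) ℂ)
    (γ : Fin n → ℕ) (hγ : IsPartition n γ) :
    ∫ u, dInduced γ (conjU A u) ∂μ =
      (Nat.multinomial Finset.univ γ : ℂ) * ∫ u, ∏ i, (conjU A u) i i ^ γ i ∂μ :=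
  stmt2_general n μ A γ hγ.2
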